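/- arXiv:2510.16796 — 3 statements merged into one kernel-verified Lean document; each statement's English description precedes it below -/
import Mathlib

section
/- Let A be a Noetherian ring, M a finitely generated A-module fitting in a short exact sequence 0 → M → L → N → 0 with L finite free and N a submodule of a finite free module. Then the natural map M → M^∨∨ is injective, and if moreover A satisfies G₀ + S₁ it is an isomorphism, i.e., M is reflexive. -/
open CategoryTheory IsLocalRing TensorProduct

universe u

/-- The Ext group `Ext^n_R(M, N)` as a module over `R`. -/
noncomputable def ExtGroup (R : Type u) [CommRing R] (M N : Type u)
    [AddCommGroup M] [Module R M] [AddCommGroup N] [Module R N] (n : ℕ) : ModuleCat.{u} R :=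
  ((Ext R (ModuleCat.{u} R) n).obj (Opposite.op (ModuleCat.of R M))).obj (ModuleCat.of R N)

/-- A Noetherian local ring `R` of dimension `n` is Gorenstein if
`Ext^i(k, R) = 0` for `i < n` and `Ext^n(k, R) ≅ k`. -/
def IsGorensteinLocalRing (R : Type u) [CommRing R] [IsLocalRing R] : Prop :=
  ∃ n : ℕ, ringKrullDim R = n ∧
    (∀ i : ℕ, i < n → Subsingleton (ExtGroup R (ResidueField R) R i)) ∧
    Nonempty (ExtGroup R (ResidueField R) R n ≅ ModuleCat.of R (ResidueField R))

/-- The depth of a module `M` over a local ring `R`, defined (following Rees) as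
the least `i` such that `Ext^i(k, M) ≠ 0`, as an extended natural number. -/
noncomputable def moduleDepth (R : Type u) [CommRing R] [IsLocalRing R]
    (M : Type u) [AddCommGroup M] [Module R M] : ℕ∞ :=
  sInf {n : ℕ∞ | ∃ i : ℕ, n = i ∧ Nontrivial (ExtGroup R (ResidueField R) M i)}

/-- `R` is Gorenstein in codimension `r`: every localization of dimension at most `r`
is a Gorenstein local ring. -/
def GorensteinInCodim (R : Type u) [CommRing R] (r : ℕ) : Prop :=
  ∀ p : PrimeSpectrum R, ringKrullDim (Localization.AtPrime p.asIdeal) ≤ (r : ℕ) →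
    IsGorensteinLocalRing (Localization.AtPrime p.asIdeal)

/-- Serre's condition `Sᵣ` for the ring `R`:
`depth R_p ≥ min (r, dim R_p)` for every prime `p`. -/
def SerreCondS (R : Type u) [CommRing R] (r : ℕ) : Prop :=
  ∀ p : PrimeSpectrum R,
    min (r : WithBot ℕ∞) (ringKrullDim (Localization.AtPrime p.asIdeal)) ≤
      (moduleDepth (Localization.AtPrime p.asIdeal) (Localization.AtPrime p.asIdeal) : WithBot ℕ∞)

open Limits in
/-- The contravariant hom functor of a linear abelian category is left exact. -/
theorem preservesFiniteLimits_linearYoneda_obj (R : Type u) [CommRing R] (Y : ModuleCat.{u} R) :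
    PreservesFiniteLimits ((linearYoneda R (ModuleCat.{u} R)).obj Y) := by
  have : PreservesFiniteLimits
      ((linearYoneda R (ModuleCat.{u} R)).obj Y ⋙ forget (ModuleCat.{u} R)) :=
    inferInstanceAs (PreservesFiniteLimits (yoneda.obj Y))
  exact preservesFiniteLimits_of_reflects_of_preserves _ (forget (ModuleCat.{u} R))

open Limits in
/-- `Ext^0` is `Hom`. -/
theorem nonempty_extGroup_zero_equiv (R : Type u) [CommRing R] (M N : Type u)
    [AddCommGroup M] [Module R M] [AddCommGroup N] [Module R N] :
    Nonempty (ExtGroup R M N 0 ≃ₗ[R] (M →ₗ[R] N)) := by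
  let G := (linearYoneda R (ModuleCat.{u} R)).obj (ModuleCat.of R N)
  have : PreservesFiniteLimits G := preservesFiniteLimits_linearYoneda_obj R _
  have : PreservesFiniteColimits G.rightOp := preservesFiniteColimits_rightOp G
  let e := (G.rightOp.leftDerivedZeroIsoSelf.app (ModuleCat.of R M)).unop
  exact ⟨e.symm.toLinearEquiv.trans ModuleCat.homLinearEquiv⟩

section Length

variable {R : Type*} [CommRing R]

theorem Module.length_dual_eq_add_of_exact {K X Q : Type*} [AddCommGroup K] [Module R K]
    [AddCommGroup X] [Module R X] [AddCommGroup Q] [Module R Q] {f : K →ₗ[R] X} {g : X →ₗ[R] Q}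
    (hfg : Function.Exact f g) (hg : Function.Surjective g) :
    Module.length R (Module.Dual R X) =
      Module.length R (Module.Dual R Q) + Module.length R f.dualMap.range := by
  refine Module.length_eq_add_of_exact g.dualMap f.dualMap.rangeRestrict
    (LinearMap.lcomp_injective_of_surjective _ hg) f.dualMap.surjective_rangeRestrict fun x ↦ ?_
  refine Iff.trans ?_ (LinearMap.exact_lcomp_of_exact_of_surjective (N := R) hfg hg x)
  rw [← Subtype.coe_inj]
  rfl

/-- The dual of a module of finite length over a local ring is no longer than the module itself,
provided that the socle of the ring has length at most one. -/
theorem Module.length_dual_le [IsLocalRing R]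
    (hR : Module.length R (Module.Dual R (ResidueField R)) ≤ 1)
    {X : Type*} [AddCommGroup X] [Module R X] (hX : IsFiniteLength R X) :
    Module.length R (Module.Dual R X) ≤ Module.length R X := by
  induction hX with
  | of_subsingleton => simp
  | @of_simple_quotient X _ _ N _ _ ih =>
    obtain ⟨m, hm, ⟨e⟩⟩ := isSimpleModule_iff_quot_maximal.mp ‹IsSimpleModule R (X ⧸ N)›
    obtain rfl := eq_maximalIdeal hm
    have hQ : Module.length R (Module.Dual R (X ⧸ N)) ≤ 1 :=
      (LinearEquiv.length_eq e.dualMap).symm.trans_le hR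
    rw [Module.length_dual_eq_add_of_exact (LinearMap.exact_subtype_mkQ N) N.mkQ_surjective,
      Module.length_eq_add_of_exact _ _ N.subtype_injective N.mkQ_surjective
        (LinearMap.exact_subtype_mkQ N), add_comm, Module.length_eq_one R (X ⧸ N)]
    exact add_le_add ((Module.length_le_of_injective _ (Submodule.subtype_injective _)).trans ih) hQ

/-- Over an Artinian local ring whose socle has length at most one, functionals on a submodule of a
finite free module extend. -/
theorem dualMap_surjective_of_length_socle_le_one [IsLocalRing R] [IsArtinianRing R]
    (hR : Module.length R (Module.Dual R (ResidueField R)) ≤ 1)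
    {K X : Type*} [AddCommGroup K] [Module R K] [AddCommGroup X] [Module R X]
    [Module.Free R X] [Module.Finite R X] (f : K →ₗ[R] X) (hf : Function.Injective f) :
    Function.Surjective f.dualMap := by
  have hXl : IsFiniteLength R X :=
    isFiniteLength_iff_isNoetherian_isArtinian.mpr ⟨inferInstance, inferInstance⟩
  have hKl : IsFiniteLength R K := hXl.of_injective hf
  let q := f.range.mkQ
  have hq : Function.Exact f q := LinearMap.exact_map_mkQ_range f
  have hqs : Function.Surjective q := Submodule.mkQ_surjective _
  have hQl := hXl.of_surjective hqs
  have hX := Module.length_dual_eq_add_of_exact hq hqs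
  have hX' := Module.length_eq_add_of_exact _ _ hf hqs hq
  have hXX : Module.length R (Module.Dual R X) = Module.length R X :=
    (LinearEquiv.length_eq (Module.Free.chooseBasis R X).toDualEquiv).symm
  have hQ := Module.length_dual_le hR hQl
  have hK := Module.length_dual_le hR hKl
  have hKtop := Module.length_ne_top_iff.mpr hKl
  have hQtop := Module.length_ne_top_iff.mpr hQl
  have hle : Module.length R K ≤ Module.length R f.dualMap.range := by
    refine (ENat.add_le_add_iff_right hQtop).mp ?_
    rw [← hX', ← hXX, hX, add_comm]
    gcongr
  obtain ⟨_, _⟩ := isFiniteLength_iff_isNoetherian_isArtinian.mp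
    (Module.length_ne_top_iff.mp (ne_top_of_le_ne_top hKtop hK))
  rw [← LinearMap.range_eq_top]
  by_contra h
  exact (Submodule.length_lt h).not_ge (hK.trans hle)

end Length

/-- Over a Noetherian local ring of dimension zero that is Gorenstein, functionals on a submodule
of a finite free module extend. -/
theorem IsGorensteinLocalRing.dualMap_surjective {R : Type u} [CommRing R] [IsLocalRing R]
    [IsNoetherianRing R] (hR : IsGorensteinLocalRing R) (hdim : ringKrullDim R ≤ 0)
    {K X : Type*} [AddCommGroup K] [Module R K] [AddCommGroup X] [Module R X]
    [Module.Free R X] [Module.Finite R X] (f : K →ₗ[R] X) (hf : Function.Injective f) :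
    Function.Surjective f.dualMap := by
  obtain ⟨n, hn, -, ⟨e⟩⟩ := hR
  obtain rfl : n = 0 := by
    rw [hn] at hdim
    exact Nat.le_zero.mp (by exact_mod_cast hdim)
  have : IsArtinianRing R := isArtinianRing_iff_isNoetherianRing_krullDimLE_zero.mpr
    ⟨inferInstance, Ring.krullDimLE_iff.mpr hdim⟩
  obtain ⟨e'⟩ := nonempty_extGroup_zero_equiv R (ResidueField R) R
  refine dualMap_surjective_of_length_socle_le_one ?_ f hf
  rw [← (e.symm.toLinearEquiv.trans e').length_eq]
  have : IsSimpleModule R (ResidueField R) :=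
    isSimpleModule_iff_quot_maximal.mpr ⟨maximalIdeal R, inferInstance, ⟨.refl _ _⟩⟩
  exact (Module.length_eq_one R (ResidueField R)).le

/-- The localization at an associated prime has a nonzero socle. -/
theorem nontrivial_residueField_dual_of_isAssociatedPrime {A : Type*} [CommRing A] (p : Ideal A)
    [p.IsPrime] [IsNoetherianRing A] (hp : IsAssociatedPrime p A) :
    Nontrivial (Module.Dual (Localization.AtPrime p) (ResidueField (Localization.AtPrime p))) := by
  let B := Localization.AtPrime p
  have hm : maximalIdeal B ∈ associatedPrimes B B :=
    Module.associatedPrimes.mem_associatedPrimes_of_comap_mem_associatedPrimes_of_isLocalizedModule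
      p.primeCompl (Algebra.linearMap A B) _
      (by simpa [B, Localization.AtPrime.under_maximalIdeal, AssociatedPrimes.mem_iff] using hp)
  obtain ⟨-, y, hy⟩ := isAssociatedPrime_iff.mp hm
  let φ : Module.Dual B (ResidueField B) :=
    (maximalIdeal B).liftQ (LinearMap.toSpanSingleton B B y) fun r hr ↦ by
      rw [hy] at hr
      simpa [Submodule.mem_colon_singleton] using hr
  refine nontrivial_of_ne φ 0 fun h ↦ (Ideal.ne_top_iff_one _).mp (maximalIdeal.isMaximal B).ne_top ?_
  have h1 : (1 : B) • y = 0 := congr($h (Submodule.Quotient.mk 1))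
  rw [hy]
  simpa [Submodule.mem_colon_singleton] using h1

/-- In a ring satisfying `S₁`, associated primes are minimal. -/
theorem SerreCondS.ringKrullDim_le_zero {A : Type u} [CommRing A] [IsNoetherianRing A]
    (hA : SerreCondS A 1) (p : Ideal A) [hpp : p.IsPrime] (hp : IsAssociatedPrime p A) :
    ringKrullDim (Localization.AtPrime p) ≤ 0 := by
  have h := hA ⟨p, hpp⟩
  obtain ⟨e⟩ := nonempty_extGroup_zero_equiv (Localization.AtPrime p)
    (ResidueField (Localization.AtPrime p)) (Localization.AtPrime p)
  have := nontrivial_residueField_dual_of_isAssociatedPrime p hp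
  have h0 : moduleDepth (Localization.AtPrime p) (Localization.AtPrime p) = 0 :=
    le_antisymm (sInf_le ⟨0, rfl, e.toEquiv.nontrivial⟩) zero_le
  simp only [h0] at h
  rcases min_le_iff.mp h with h | h
  · norm_num at h
  · exact h

/-- If functionals on submodules of finite free modules over `A_p` extend, then so do functionals
on submodules of finite free modules over `A`, up to multiplication by some `s ∉ p`. -/
theorem exists_smul_eq_comp_of_dualMap_surjective {A : Type u} [CommRing A]
    {M : Type u} [AddCommGroup M] [Module A M] [Module.Finite A M] {a : ℕ}
    (f : M →ₗ[A] (Fin a → A)) (hf : Function.Injective f) (p : Ideal A) [p.IsPrime]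
    (hp : ∀ (K : Type u) [AddCommGroup K] [Module (Localization.AtPrime p) K]
      (F : K →ₗ[Localization.AtPrime p] (Fin a → Localization.AtPrime p)),
      Function.Injective F → Function.Surjective F.dualMap)
    (l : Module.Dual A M) : ∃ s ∉ p, ∃ μ : Module.Dual A (Fin a → A), s • l = μ ∘ₗ f := by
  let S := p.primeCompl
  let B := Localization.AtPrime p
  let i : A →ₗ[A] B := Algebra.linearMap A B
  let j : (Fin a → A) →ₗ[A] (Fin a → B) := .pi fun k ↦ i ∘ₗ .proj k
  let m := LocalizedModule.mkLinearMap S M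
  have : IsLocalizedModule S j := IsLocalizedModule.pi S fun _ ↦ i
  let F := IsLocalizedModule.mapExtendScalars S m j B f
  have hF : Function.Injective F := IsLocalizedModule.map_injective S m j f hf
  obtain ⟨ν, hν⟩ := hp _ F hF (IsLocalizedModule.mapExtendScalars S m i B l)
  obtain ⟨μ, s, hμ⟩ := Module.FinitePresentation.exists_lift_of_isLocalizedModule S i
    (ν.restrictScalars A ∘ₗ j)
  obtain ⟨t, ht⟩ := Module.Finite.exists_smul_of_comp_eq_of_isLocalizedModule S i
    (s • l) (μ ∘ₗ f) (by
      ext x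
      have h1 : ν (j (f x)) = i (l x) := by
        have := congr($hν (m x))
        simpa only [F, LinearMap.dualMap_apply, IsLocalizedModule.mapExtendScalars_apply_apply,
          IsLocalizedModule.map_apply] using this
      have h2 : i (μ (f x)) = s • ν (j (f x)) := congr($hμ (f x))
      change i (s • l x) = i (μ (f x))
      rw [h2, h1, LinearMap.map_smul_of_tower])
  refine ⟨t * s, (t * s).2, t • μ, ?_⟩
  ext x
  simpa [Submonoid.smul_def, mul_assoc] using congr($ht x)

/-- If a finitely generated module `M` over a Noetherian ring `A` fits into a short
exact sequence `0 → M → L → N → 0` with `L` finite free and `N` a submodule of a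
finite free module, then the evaluation map `M → M^∨∨` is injective; if moreover `A`
satisfies `G₀ + S₁`, it is an isomorphism, i.e. `M` is reflexive. -/
theorem reflexive_of_ses_into_free
    (A : Type u) [CommRing A] [IsNoetherianRing A]
    (M : Type u) [AddCommGroup M] [Module A M] [Module.Finite A M]
    (N : Type u) [AddCommGroup N] [Module A N]
    (a b : ℕ) (f : M →ₗ[A] (Fin a → A)) (g : (Fin a → A) →ₗ[A] N)
    (hf : Function.Injective f) (hg : Function.Surjective g)
    (hfg : Function.Exact f g)
    (h : N →ₗ[A] (Fin b → A)) (hh : Function.Injective h) :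
    Function.Injective (Module.Dual.eval A M) ∧
      (GorensteinInCodim A 0 → SerreCondS A 1 →
        Function.Bijective (Module.Dual.eval A M)) := by
  have hinj : Function.Injective (Module.Dual.eval A M) := by
    rw [injective_iff_map_eq_zero]
    refine fun m hm ↦ hf ((funext fun i ↦ ?_ : f m = 0).trans f.map_zero.symm)
    exact congr($hm (.proj i ∘ₗ f))
  refine ⟨hinj, fun hG hS ↦ ⟨hinj, fun ξ ↦ ?_⟩⟩
  obtain ⟨x, hx⟩ := (Module.evalEquiv A (Fin a → A)).surjective (ξ ∘ₗ f.dualMap)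
  have hξ (μ : Module.Dual A (Fin a → A)) : ξ (μ ∘ₗ f) = μ x := congr($hx μ).symm
  have hgx : g x = 0 := by
    refine hh (Eq.trans (funext fun i ↦ ?_) h.map_zero.symm)
    have hi := hξ (.proj i ∘ₗ h ∘ₗ g)
    rw [LinearMap.comp_assoc, LinearMap.comp_assoc, hfg.linearMap_comp_eq_zero] at hi
    simpa using hi.symm
  obtain ⟨m, rfl⟩ := (hfg x).mp hgx
  refine ⟨m, LinearMap.ext fun l ↦ ?_⟩
  by_contra hne
  obtain ⟨p, hp, hle⟩ := exists_le_isAssociatedPrime_of_isNoetherianRing A _ (sub_ne_zero.mpr hne)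
  have := hp.isPrime
  have hdim := hS.ringKrullDim_le_zero p hp
  obtain ⟨s, hs, μ, hμ⟩ := exists_smul_eq_comp_of_dualMap_surjective f hf p
    (fun _ _ _ F hF ↦ (hG ⟨p, this⟩ hdim).dualMap_surjective hdim F hF) l
  refine hs (hle (Submodule.mem_colon_singleton.mpr ?_))
  have h1 : s • ξ l = μ (f m) := by rw [← map_smul, hμ, hξ]
  have h2 : s • l m = μ (f m) := congr($hμ m)
  rw [Submodule.mem_bot, smul_sub, h1, Module.Dual.eval_apply, h2, sub_self]
end

section
/- Let B → A be a faithfully flat ring homomorphism of Noetherian rings such that every fiber ring A ⊗_B κ(q) is zero-dimensional and Gorenstein (e.g., B → A étale and surjective on spectra). Then B satisfies Serre's condition Sᵣ if and only if A satisfies Sᵣ. -/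
open CategoryTheory IsLocalRing TensorProduct

universe u

section
open Abelian

/-- The vanishing of `ExtGroup`, computed from a projective resolution in the first variable,
agrees with that of the Ext groups defined through the derived category. -/
theorem subsingleton_extGroup_iff {R : Type u} [CommRing R] (M N : Type u)
    [AddCommGroup M] [Module R M] [AddCommGroup N] [Module R N] (n : ℕ) :
    Subsingleton (ExtGroup R M N n) ↔
      Subsingleton (Abelian.Ext (ModuleCat.of R M) (ModuleCat.of R N) n) := by
  let P := projectiveResolution (ModuleCat.of R M)
  have key : Subsingleton (ExtGroup R M N n) ↔
      (P.complex.linearYonedaObj R (ModuleCat.of R N)).ExactAt n := by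
    rw [← ModuleCat.isZero_iff_subsingleton, HomologicalComplex.exactAt_iff_isZero_homology]
    exact (P.isoExt n (ModuleCat.of R N)).isZero_iff
  rw [key]
  cases n with
  | zero =>
    rw [HomologicalComplex.exactAt_iff' _ 0 0 1 (by simp) (by simp),
      ShortComplex.moduleCat_exact_iff, Ext.addEquiv₀.subsingleton_congr]
    let π : P.complex.X 0 ⟶ ModuleCat.of R M := P.π.f 0
    have : Epi π := inferInstanceAs (Epi (P.π.f 0))
    have hπ : P.complex.d 1 0 ≫ π = 0 := P.complex_d_comp_π_f_zero
    constructor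
    · intro h
      refine subsingleton_of_forall_eq 0 fun f ↦ ?_
      obtain ⟨(g : P.complex.X 0 ⟶ ModuleCat.of R N), hg⟩ := h (π ≫ f)
        (show P.complex.d 1 0 ≫ π ≫ f = 0 by rw [reassoc_of% hπ, Limits.zero_comp])
      have hf : P.complex.d 0 0 ≫ g = π ≫ f := hg
      rw [P.complex.shape 0 0 (by simp), Limits.zero_comp] at hf
      rwa [← cancel_epi π, Limits.comp_zero, eq_comm]
    · intro h f hf
      let g : ModuleCat.of R M ⟶ ModuleCat.of R N := P.exact₀.desc f hf
      have hg : π ≫ g = f := P.exact₀.g_desc f hf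
      rw [h.elim g 0, Limits.comp_zero] at hg
      exact ⟨0, (map_zero _).trans hg⟩
  | succ n =>
    rw [HomologicalComplex.exactAt_iff' _ n (n + 1) (n + 2) (by simp) (by simp),
      ShortComplex.moduleCat_exact_iff]
    constructor
    · intro h
      refine subsingleton_of_forall_eq 0 fun a ↦ ?_
      obtain ⟨f, hf, rfl⟩ := P.extMk_surjective a (n + 2) rfl
      exact (P.extMk_eq_zero_iff f _ rfl hf n rfl).mpr (h f hf)
    · intro h f hf
      exact (P.extMk_eq_zero_iff f (n + 2) rfl hf n rfl).mp (h.elim _ _)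

end

theorem le_moduleDepth_iff {R : Type u} [CommRing R] [IsLocalRing R] (M : Type u)
    [AddCommGroup M] [Module R M] (n : ℕ) :
    (n : ℕ∞) ≤ moduleDepth R M ↔ ∀ i < n,
      Subsingleton (Abelian.Ext (ModuleCat.of R (ResidueField R)) (ModuleCat.of R M) i) := by
  simp only [moduleDepth, le_sInf_iff, Set.mem_ofPred_eq, ← subsingleton_extGroup_iff]
  constructor
  · intro h i hi
    by_contra hs
    have := h i ⟨i, rfl, not_subsingleton_iff_nontrivial.mp hs⟩
    exact absurd (Nat.cast_le.mp this) (by omega)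
  · rintro h _ ⟨i, rfl, hi⟩
    by_contra hs
    exact not_subsingleton_iff_nontrivial.mpr hi (h i (Nat.cast_lt.mp (not_le.mp hs)))

/-- **Rees' theorem**: a nonzero finite module over a Noetherian local ring has depth at least `n`
iff it admits a regular sequence of length `n` in the maximal ideal. -/
theorem le_moduleDepth_iff_exists_isRegular {R : Type u} [CommRing R] [IsLocalRing R]
    [IsNoetherianRing R] (M : Type u) [AddCommGroup M] [Module R M] [Module.Finite R M]
    [Nontrivial M] (n : ℕ) :
    (n : ℕ∞) ≤ moduleDepth R M ↔ ∃ rs : List R, rs.length = n ∧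
      (∀ r ∈ rs, r ∈ maximalIdeal R) ∧ RingTheory.Sequence.IsRegular M rs := by
  have lt : maximalIdeal R • (⊤ : Submodule R M) < ⊤ :=
    (Submodule.top_ne_ideal_smul_of_le_jacobson_annihilator
      (maximalIdeal_le_jacobson _)).symm.lt_top
  have supp : Module.support R (ResidueField R) = PrimeSpectrum.zeroLocus (maximalIdeal R) := by
    change Module.support R (R ⧸ maximalIdeal R) = _
    rw [Module.support_eq_zeroLocus, Ideal.annihilator_quotient]
  rw [le_moduleDepth_iff]
  constructor
  · exact ModuleCat.exists_isRegular_of_exists_subsingleton_ext _ n (.of R M) lt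
      (.of R (ResidueField R)) supp
  · rintro ⟨rs, rfl, mem, reg⟩
    exact ModuleCat.subsingleton_ext_of_exists_isRegular _ (.of R (ResidueField R)) supp.le
      (.of R M) lt rs mem reg

/-- Dividing by a nonzerodivisor lowers the depth by at most one. -/
theorem le_moduleDepth_quotSMulTop {R : Type u} [CommRing R] [IsLocalRing R]
    (M : Type u) [AddCommGroup M] [Module R M] {x : R} (hx : IsSMulRegular M x) {n : ℕ}
    (h : ((n + 1 : ℕ) : ℕ∞) ≤ moduleDepth R M) : (n : ℕ∞) ≤ moduleDepth R (QuotSMulTop x M) := by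
  rw [le_moduleDepth_iff] at h ⊢
  intro i hi
  have hx' : IsSMulRegular (ModuleCat.of R M) x := hx
  have zero1 := AddCommGrpCat.isZero_of_iff_subsingleton.mpr (h i (by omega))
  have zero2 := AddCommGrpCat.isZero_of_iff_subsingleton.mpr (h (i + 1) (by omega))
  exact AddCommGrpCat.subsingleton_of_isZero <| ShortComplex.Exact.isZero_of_both_zeros
    ((Abelian.Ext.covariant_sequence_exact₃' _ hx'.smulShortComplex_shortExact) i (i + 1) rfl)
    (zero1.eq_zero_of_src _) (zero2.eq_zero_of_tgt _)

theorem moduleDepth_congr {R : Type u} [CommRing R] [IsLocalRing R] {M N : Type u}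
    [AddCommGroup M] [Module R M] [AddCommGroup N] [Module R N] (e : M ≃ₗ[R] N) :
    moduleDepth R M = moduleDepth R N := by
  have (i : ℕ) : Nontrivial (ExtGroup R (ResidueField R) M i) ↔
      Nontrivial (ExtGroup R (ResidueField R) N i) :=
    (((_root_.Ext R (ModuleCat.{u} R) i).obj _).mapIso
      e.toModuleIso).toLinearEquiv.toEquiv.nontrivial_congr
  simp only [moduleDepth, this]

theorem one_le_moduleDepth_iff {R : Type u} [CommRing R] [IsLocalRing R] (M : Type u)
    [AddCommGroup M] [Module R M] :
    ((1 : ℕ) : ℕ∞) ≤ moduleDepth R M ↔ Subsingleton (ResidueField R →ₗ[R] M) := by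
  rw [le_moduleDepth_iff]
  simp only [Nat.lt_one_iff, forall_eq]
  rw [Abelian.Ext.addEquiv₀.subsingleton_congr, ModuleCat.homEquiv.subsingleton_congr]

section Flat

variable {B A : Type u} [CommRing B] [CommRing A] [IsNoetherianRing A]
  [IsLocalRing B] [IsLocalRing A] [Algebra B A] [Module.FaithfullyFlat B A]

/-- If `𝔪_A` is the only prime of `A` containing `𝔪_B A`, then the residue field of `A` embeds
into the closed fiber `A ⊗[B] κ(B)`. -/
theorem exists_injective_residueField_baseChange
    (h : ∀ P : Ideal A, P.IsPrime → (maximalIdeal B).map (algebraMap B A) ≤ P →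
      P = maximalIdeal A) :
    ∃ f : ResidueField A →ₗ[A] A ⊗[B] ResidueField B, Function.Injective f := by
  obtain ⟨P, hP⟩ := associatedPrimes.nonempty A (A ⊗[B] ResidueField B)
  have hPm : P = maximalIdeal A := by
    refine h P hP.isPrime (Ideal.map_le_iff_le_comap.mpr fun b hb ↦ ?_)
    refine hP.annihilator_le ?_
    rw [Submodule.annihilator_top, Module.mem_annihilator]
    intro t
    induction t using TensorProduct.induction_on with
    | zero => simp
    | add x y hx hy => rw [smul_add, hx, hy, add_zero]
    | tmul a c =>
      have : b • c = 0 := by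
        rw [← algebraMap_smul (ResidueField B) b c, ResidueField.algebraMap_eq,
          (residue_eq_zero_iff b).mpr hb, zero_smul]
      rw [algebraMap_smul, ← TensorProduct.tmul_smul, this, TensorProduct.tmul_zero]
  subst hPm
  obtain ⟨-, x, hx⟩ := isAssociatedPrime_iff.mp hP
  rw [Submodule.bot_colon', Submodule.annihilator_span_singleton] at hx
  exact ⟨(maximalIdeal A).liftQ (LinearMap.toSpanSingleton A _ x) hx.le,
    LinearMap.ker_eq_bot.mp (Submodule.ker_liftQ_eq_bot _ _ _ hx.ge)⟩

/-- Depth is preserved by base change along a faithfully flat homomorphism of Noetherian local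
rings whose closed fiber is zero-dimensional. -/
theorem le_moduleDepth_baseChange_iff [IsNoetherianRing B]
    (h : ∀ P : Ideal A, P.IsPrime → (maximalIdeal B).map (algebraMap B A) ≤ P →
      P = maximalIdeal A)
    (M : Type u) [AddCommGroup M] [Module B M] [Module.Finite B M] [Nontrivial M] (n : ℕ) :
    (n : ℕ∞) ≤ moduleDepth A (A ⊗[B] M) ↔ (n : ℕ∞) ≤ moduleDepth B M := by
  constructor
  · induction n generalizing M with
    | zero => simp
    | succ n ih =>
      intro hn
      have hA : Subsingleton (ResidueField A →ₗ[A] A ⊗[B] M) :=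
        (one_le_moduleDepth_iff _).mp (le_trans (by simp) hn)
      have hB : Subsingleton (ResidueField B →ₗ[B] M) := by
        refine subsingleton_of_forall_eq 0 fun f ↦ ?_
        by_contra hf
        obtain ⟨g, hg⟩ := exists_injective_residueField_baseChange h
        have : IsSimpleModule B (ResidueField B) :=
          isSimpleModule_iff_isCoatom.mpr (maximalIdeal.isMaximal B).out
        have hfi : Function.Injective f := f.injective_or_eq_zero.resolve_right hf
        have := Module.Flat.lTensor_preserves_injective_linearMap (M := A) f hfi
        have hinj : Function.Injective ((f.baseChange A) ∘ₗ g) := by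
          rw [LinearMap.coe_comp]
          exact this.comp hg
        rw [hA.elim ((f.baseChange A) ∘ₗ g) 0] at hinj
        exact one_ne_zero (hinj (a₁ := 1) (a₂ := 0) rfl)
      obtain ⟨x, hx, hreg⟩ := IsSMulRegular.subsingleton_linearMap_iff.mp hB
      have hxm : x ∈ maximalIdeal B := by
        rwa [← Ideal.annihilator_quotient (I := maximalIdeal B)]
      have := nontrivial_quotSMulTop_of_mem_maximalIdeal M hxm
      have hregA : IsSMulRegular (A ⊗[B] M) (algebraMap B A x) :=
        hreg.of_flat_of_isBaseChange (TensorProduct.isBaseChange B M A)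
      have hq := le_moduleDepth_quotSMulTop _ hregA hn
      rw [moduleDepth_congr (QuotSMulTop.algebraMapTensorEquivTensorQuotSMulTop x M A)] at hq
      obtain ⟨rs, rfl, mem, reg⟩ := (le_moduleDepth_iff_exists_isRegular _ n).mp (ih _ hq)
      exact (le_moduleDepth_iff_exists_isRegular _ _).mpr ⟨x :: rs, rfl,
        List.forall_mem_cons.mpr ⟨hxm, mem⟩, .cons hreg reg⟩
  · intro hn
    obtain ⟨rs, rfl, mem, reg⟩ := (le_moduleDepth_iff_exists_isRegular _ n).mp hn
    refine (le_moduleDepth_iff_exists_isRegular _ _).mpr ⟨rs.map (algebraMap B A), by simp, ?_,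
      reg.of_faithfullyFlat_of_isBaseChange (TensorProduct.isBaseChange B M A)⟩
    simp only [List.mem_map, forall_exists_index, and_imp, forall_apply_eq_imp_iff₂]
    exact fun b hb ↦ map_nonunit (algebraMap B A) b (mem b hb)

end Flat

/-- Primes of `A` over `q` are incomparable when the fiber over `q` is zero-dimensional. -/
theorem eq_of_le_of_liesOver_of_krullDimLE_zero_fiber {B A : Type*} [CommRing B]
    [CommRing A] [Algebra B A]
    (q : Ideal B) [q.IsPrime] [Ring.KrullDimLE 0 (q.Fiber A)]
    (P P' : Ideal A) [P.IsPrime] [P'.IsPrime] [P.LiesOver q] (hle : P' ≤ P)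
    (hq : q.map (algebraMap B A) ≤ P') : P' = P := by
  have : P'.LiesOver q := by
    constructor
    refine le_antisymm (Ideal.map_le_iff_le_comap.mp hq) ?_
    rw [Ideal.over_def P q]
    exact Ideal.comap_mono hle
  let e := PrimeSpectrum.primesOverOrderIsoFiber B A q
  let x : q.primesOver A := ⟨P, ‹_›, ‹_›⟩
  let x' : q.primesOver A := ⟨P', ‹_›, ‹_›⟩
  have hx : e x' ≤ e x := e.monotone hle
  have : e x' = e x := PrimeSpectrum.ext
    ((e x').isPrime.isMaximal'.eq_of_le (e x).isPrime.ne_top hx)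
  exact congrArg Subtype.val (e.injective this)

section Fiber

variable {B A : Type u} [CommRing B] [CommRing A] [IsNoetherianRing B] [IsNoetherianRing A]
  [Algebra B A] [Module.Flat B A]

theorem height_eq_of_krullDimLE_zero_fiber (P : Ideal A) [P.IsPrime] (q : Ideal B) [q.IsPrime]
    [P.LiesOver q] [Ring.KrullDimLE 0 (q.Fiber A)] :
    P.height = q.height := by
  have hP : P ∈ (q.map (algebraMap B A)).minimalPrimes := by
    refine ⟨⟨‹_›, Ideal.map_le_iff_le_comap.mpr (Ideal.over_def P q).le⟩, fun P' hP' hle ↦ ?_⟩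
    have := hP'.1
    exact (eq_of_le_of_liesOver_of_krullDimLE_zero_fiber q P P' hle hP'.2).ge
  have hP' : P.map (Ideal.Quotient.mk (q.map (algebraMap B A))) ∈
      (⊥ : Ideal (A ⧸ q.map (algebraMap B A))).minimalPrimes := by
    rw [← Ideal.map_quotient_self (q.map (algebraMap B A)),
      Ideal.minimalPrimes_map_of_surjective Ideal.Quotient.mk_surjective, Ideal.mk_ker, sup_idem]
    exact ⟨P, hP, rfl⟩
  have := hP'.1.1
  rw [Ideal.height_eq_height_add_of_liesOver_of_hasGoingDown q P, Ideal.height_eq_zero_iff.mpr hP',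
    add_zero]

theorem moduleDepth_localization_eq_of_krullDimLE_zero_fiber (P : Ideal A) [P.IsPrime]
    (q : Ideal B) [q.IsPrime] [P.LiesOver q] [Ring.KrullDimLE 0 (q.Fiber A)] :
    moduleDepth (Localization.AtPrime P) (Localization.AtPrime P) =
      moduleDepth (Localization.AtPrime q) (Localization.AtPrime q) := by
  let := Localization.AtPrime.algebraOfLiesOver q P
  have : IsLocalHom (algebraMap (Localization.AtPrime q) (Localization.AtPrime P)) := by
    rw [RingHom.algebraMap_toAlgebra]
    exact Localization.isLocalHom_localRingHom q P (algebraMap B A) Ideal.LiesOver.over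
  have : Module.FaithfullyFlat (Localization.AtPrime q) (Localization.AtPrime P) :=
    Module.FaithfullyFlat.of_flat_of_isLocalHom
  rw [← moduleDepth_congr (AlgebraTensorModule.rid (Localization.AtPrime q)
    (Localization.AtPrime P) (Localization.AtPrime P))]
  refine ENat.eq_of_forall_natCast_le_iff fun n ↦
    le_moduleDepth_baseChange_iff (fun Q hQ hle ↦ ?_) _ n
  refine Localization.AtPrime.eq_maximalIdeal_iff_under_eq.mp
    (eq_of_le_of_liesOver_of_krullDimLE_zero_fiber q P _ ?_ ?_)
  · exact (Ideal.comap_mono (le_maximalIdeal hQ.ne_top)).trans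
      Localization.AtPrime.under_maximalIdeal.le
  · rw [← Localization.AtPrime.map_eq_maximalIdeal, Ideal.map_map,
      ← IsScalarTower.algebraMap_eq, IsScalarTower.algebraMap_eq B A, ← Ideal.map_map] at hle
    exact Ideal.map_le_iff_le_comap.mp hle

end Fiber

/-- Let `B → A` be a faithfully flat map of Noetherian rings all of whose fiber rings
`A ⊗_B κ(q)` are zero-dimensional and Gorenstein. Then `B` satisfies Serre's condition
`Sᵣ` if and only if `A` does. -/
theorem serreCondS_iff_of_faithfullyFlat
    (B A : Type u) [CommRing B] [CommRing A] [IsNoetherianRing B] [IsNoetherianRing A]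
    [Algebra B A] [Module.FaithfullyFlat B A]
    (hdim : ∀ q : PrimeSpectrum B,
      ringKrullDim
        (A ⊗[B] IsLocalRing.ResidueField (Localization.AtPrime q.asIdeal)) = 0)
    (hGor : ∀ q : PrimeSpectrum B,
      ∀ P : PrimeSpectrum
        (A ⊗[B] IsLocalRing.ResidueField (Localization.AtPrime q.asIdeal)),
        IsGorensteinLocalRing (Localization.AtPrime P.asIdeal))
    (r : ℕ) :
    SerreCondS B r ↔ SerreCondS A r := by
  have hfib (q : PrimeSpectrum B) : Ring.KrullDimLE 0 (q.asIdeal.Fiber A) := by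
    rw [Ring.krullDimLE_iff, ← ringKrullDim_eq_of_ringEquiv
      (Algebra.TensorProduct.comm B A q.asIdeal.ResidueField).toRingEquiv]
    exact (hdim q).le
  have key (P : PrimeSpectrum A) :
      (min (r : WithBot ℕ∞) (ringKrullDim (Localization.AtPrime P.asIdeal)) ≤
        (moduleDepth (Localization.AtPrime P.asIdeal) (Localization.AtPrime P.asIdeal))) ↔
      (min (r : WithBot ℕ∞)
          (ringKrullDim (Localization.AtPrime (P.comap (algebraMap B A)).asIdeal)) ≤
        (moduleDepth (Localization.AtPrime (P.comap (algebraMap B A)).asIdeal)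
          (Localization.AtPrime (P.comap (algebraMap B A)).asIdeal))) := by
    have : P.asIdeal.LiesOver (P.comap (algebraMap B A)).asIdeal := ⟨rfl⟩
    have := hfib (P.comap (algebraMap B A))
    rw [moduleDepth_localization_eq_of_krullDimLE_zero_fiber P.asIdeal
        (P.comap (algebraMap B A)).asIdeal,
      IsLocalization.AtPrime.ringKrullDim_eq_height P.asIdeal,
      IsLocalization.AtPrime.ringKrullDim_eq_height (P.comap (algebraMap B A)).asIdeal,
      height_eq_of_krullDimLE_zero_fiber P.asIdeal (P.comap (algebraMap B A)).asIdeal]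
  constructor
  · exact fun h P ↦ (key P).mpr (h _)
  · intro h q
    obtain ⟨P, rfl⟩ := PrimeSpectrum.comap_surjective_of_faithfullyFlat (B := A) q
    exact (key P).mp (h P)
end

section
/- Let B → A be an étale ring homomorphism of Noetherian rings inducing a surjection on spectra. Then B is Gorenstein in codimension r (Gᵣ) if and only if A is Gorenstein in codimension r. -/
open CategoryTheory IsLocalRing TensorProduct

universe u

namespace ModuleCat

/-- The base change functor `M ↦ S ⊗[R] M`. -/
@[simps]
noncomputable def baseChange (R S : Type u) [CommRing R] [CommRing S] [Algebra R S] :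
    ModuleCat.{u} R ⥤ ModuleCat.{u} S where
  obj M := of S (S ⊗[R] M)
  map f := ofHom (f.hom.baseChange S)

section BaseChange

variable (R S : Type u) [CommRing R] [CommRing S] [Algebra R S]

instance : (baseChange R S).Additive where
  map_add {_ _ f g} := by ext : 1; exact LinearMap.baseChange_add f.hom g.hom

instance : (baseChange R S).PreservesProjectiveObjects where
  projective_obj {M} hM := by
    rw [← IsProjective.iff_projective] at hM
    rw [← IsProjective.iff_projective]
    exact inferInstanceAs (Module.Projective S (S ⊗[R] M))

instance [Module.Flat R S] : (baseChange R S).PreservesHomology := by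
  refine ((baseChange R S).exact_tfae.out 1 2 :).mp fun C hC ↦ ?_
  rw [ShortComplex.ShortExact.moduleCat_exact_iff_function_exact] at hC ⊢
  exact Module.Flat.lTensor_exact S hC

variable {R}

/-- For `M` finitely presented and `S` flat, `S ⊗ Hom(M, N) ≅ Hom(S ⊗ M, S ⊗ N)`. -/
noncomputable def baseChangeHomEquiv [Module.Flat R S] (M N : ModuleCat.{u} R)
    [Module.FinitePresentation R M] :
    S ⊗[R] (M ⟶ N) ≃ₗ[S] ((baseChange R S).obj M ⟶ (baseChange R S).obj N) :=
  (homLinearEquiv (S := R)).baseChange R S _ _ ≪≫ₗ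
    (Module.FinitePresentation.isBaseChange_map R M N S).equiv ≪≫ₗ
    (homLinearEquiv (S := S) (M := (baseChange R S).obj M) (N := (baseChange R S).obj N)).symm

lemma baseChangeHomEquiv_tmul [Module.Flat R S] (M N : ModuleCat.{u} R)
    [Module.FinitePresentation R M] (s : S) (f : M ⟶ N) :
    baseChangeHomEquiv S M N (s ⊗ₜ f) = s • (baseChange R S).map f := by
  ext : 1
  exact (Module.FinitePresentation.isBaseChange_map R M N S).equiv_tmul s f.hom

/-- Base change commutes with forming the complex `Hom(X, N)`, for a complex `X` of finitely
presented modules. -/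
noncomputable def baseChangeLinearYonedaObjIso [Module.Flat R S]
    (X : ChainComplex (ModuleCat.{u} R) ℕ) [∀ i, Module.FinitePresentation R (X.X i)] (N : ModuleCat.{u} R) :
    ((baseChange R S).mapHomologicalComplex _).obj (X.linearYonedaObj R N) ≅
      ChainComplex.linearYonedaObj (((baseChange R S).mapHomologicalComplex _).obj X) S
        ((baseChange R S).obj N) :=
  HomologicalComplex.Hom.isoOfComponents
    (fun i ↦ (baseChangeHomEquiv S (X.X i) N).toModuleIso) fun i j _ ↦ by
      refine ModuleCat.hom_ext (LinearMap.ext fun x ↦ ?_)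
      induction x using TensorProduct.induction_on with
      | zero => exact (map_zero _).trans (map_zero _).symm
      | add x y hx hy =>
        exact (map_add _ x y).trans ((congr_arg₂ _ hx hy).trans (map_add _ x y).symm)
      | tmul s f =>
        have comm (g : X.X i ⟶ N) : (baseChange R S).map (X.d j i) ≫
            baseChangeHomEquiv S (X.X i) N (s ⊗ₜ g) =
              baseChangeHomEquiv S (X.X j) N (s ⊗ₜ (X.d j i ≫ g)) := by
          rw [baseChangeHomEquiv_tmul, baseChangeHomEquiv_tmul, Linear.comp_smul, Functor.map_comp]
        exact comm f

end BaseChange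

end ModuleCat

namespace FGModuleCat

variable {R : Type u} [CommRing R] [IsNoetherianRing R]

lemma exists_projective_epi (M : FGModuleCat.{u} R) :
    ∃ (P : FGModuleCat.{u} R) (f : P ⟶ M), Module.Projective R P ∧ Epi f := by
  obtain ⟨n, f, hf⟩ := Module.Finite.exists_fin' R M
  refine ⟨of R (Fin n → R), ofHom f, inferInstanceAs (Module.Projective R (Fin n → R)), ?_⟩
  refine (forget₂ (FGModuleCat R) (ModuleCat R)).epi_of_epi_map ?_
  exact (ModuleCat.epi_iff_surjective _).mpr hf

lemma projective_of_moduleProjective (P : FGModuleCat.{u} R) [Module.Projective R P] :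
    Projective P where
  factors {E X} f e he := by
    have : Projective P.obj := (IsProjective.iff_projective P).mp ‹_›
    let F := forget₂ (FGModuleCat R) (ModuleCat R)
    exact ⟨F.preimage (Projective.factorThru (P := P.obj) (F.map f) (F.map e)),
      F.map_injective <| by simp [F, Projective.factorThru_comp]⟩

instance : EnoughProjectives (FGModuleCat.{u} R) where
  presentation M := by
    obtain ⟨P, f, hP, hf⟩ := exists_projective_epi M
    exact ⟨{ p := P, f := f, projective := projective_of_moduleProjective P }⟩

instance : (forget₂ (FGModuleCat.{u} R) (ModuleCat.{u} R)).PreservesProjectiveObjects where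
  projective_obj {M} hM := by
    obtain ⟨P, f, hP, hf⟩ := exists_projective_epi M
    let F := forget₂ (FGModuleCat R) (ModuleCat R)
    have : Projective (F.obj P) := (IsProjective.iff_projective P).mp hP
    let r : Retract (F.obj M) (F.obj P) := Retract.map
      ⟨Projective.factorThru (𝟙 M) f, f, Projective.factorThru_comp _ _⟩ F
    exact r.projective

end FGModuleCat

section

open ModuleCat

variable {R : Type u} (S : Type u) [CommRing R] [CommRing S] [Algebra R S]

instance [IsNoetherianRing R] (M : FGModuleCat.{u} R)
    (P : ProjectiveResolution M) (n : ℕ) : Module.FinitePresentation R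
      (((forget₂ (FGModuleCat.{u} R) (ModuleCat.{u} R)).mapProjectiveResolution P).complex.X n) :=
  Module.finitePresentation_of_finite R (P.complex.X n)

/-- `Ext` of finitely generated modules over a Noetherian ring commutes with flat base change. -/
theorem nonempty_iso_extGroup_baseChange [IsNoetherianRing R] [Module.Flat R S]
    (M N : Type u) [AddCommGroup M] [Module R M] [AddCommGroup N] [Module R N]
    [Module.Finite R M] (n : ℕ) :
    Nonempty ((baseChange R S).obj (ExtGroup R M N n) ≅
      ExtGroup S (S ⊗[R] M) (S ⊗[R] N) n) := by
  let P := (forget₂ (FGModuleCat.{u} R) (ModuleCat.{u} R)).mapProjectiveResolution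
    (projectiveResolution (FGModuleCat.of R M))
  let K := P.complex.linearYonedaObj R (of R N)
  exact ⟨(baseChange R S).mapIso (P.isoExt n (of R N)) ≪≫
    ((K.sc n).mapHomologyIso (baseChange R S)).symm ≪≫
    (HomologicalComplex.homologyFunctor _ _ n).mapIso
      (baseChangeLinearYonedaObjIso S P.complex _) ≪≫
    (((baseChange R S).mapProjectiveResolution P).isoExt n _).symm⟩

end

namespace IsLocalRing

variable {R S : Type u} [CommRing R] [CommRing S] [Algebra R S] [IsLocalRing R] [IsLocalRing S]

instance isSimpleModule_residueField : IsSimpleModule R (ResidueField R) :=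
  isSimpleModule_iff_quot_maximal.mpr
    ⟨maximalIdeal R, inferInstance, ⟨LinearEquiv.refl R (R ⧸ maximalIdeal R)⟩⟩

/-- If `𝔪_R S = 𝔪_S`, then `S ⊗[R] κ(R)` is the residue field of `S`. -/
noncomputable def tensorResidueFieldEquiv
    (hm : (maximalIdeal R).map (algebraMap R S) = maximalIdeal S) :
    S ⊗[R] ResidueField R ≃ₗ[S] ResidueField S :=
  ((maximalIdeal R).qoutMapEquivTensorQout S).symm ≪≫ₗ Submodule.quotEquivOfEq _ _ hm

lemma nonempty_tensor_linearEquiv_residueField_iff [Module.FaithfullyFlat R S]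
    (hm : (maximalIdeal R).map (algebraMap R S) = maximalIdeal S)
    (M : Type u) [AddCommGroup M] [Module R M] :
    Nonempty (S ⊗[R] M ≃ₗ[S] ResidueField S) ↔ Nonempty (M ≃ₗ[R] ResidueField R) := by
  refine ⟨fun ⟨e⟩ ↦ ?_, fun ⟨e⟩ ↦ ⟨e.baseChange R S _ _ ≪≫ₗ tensorResidueFieldEquiv hm⟩⟩
  have hkill (r : R) (hr : r ∈ maximalIdeal R) (x : M) : r • x = 0 := by
    have hr' : residue S (algebraMap R S r) = 0 :=
      (residue_eq_zero_iff _).mpr (hm ▸ Ideal.mem_map_of_mem _ hr)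
    rw [← Module.FaithfullyFlat.one_tmul_eq_zero_iff R M (A := S), TensorProduct.tmul_smul,
      ← algebraMap_smul S, ← e.map_eq_zero_iff, map_smul, Algebra.smul_def,
      ResidueField.algebraMap_eq, hr', zero_mul]
  have : Nontrivial M :=
    (Module.FaithfullyFlat.nontrivial_tensorProduct_iff_right R S).mp e.toEquiv.nontrivial
  obtain ⟨x, hx⟩ := exists_ne (0 : M)
  let f : ResidueField R →ₗ[R] M :=
    Submodule.liftQ (maximalIdeal R) (LinearMap.toSpanSingleton R M x) fun r hr ↦ by
      simpa using hkill r hr x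
  have hf : f 1 = x := one_smul R x
  let g : ResidueField S →ₗ[S] ResidueField S :=
    e.toLinearMap ∘ₗ f.baseChange S ∘ₗ (tensorResidueFieldEquiv hm).symm.toLinearMap
  have hg : g ≠ 0 := fun h ↦ hx <| by
    have := LinearMap.congr_fun h (tensorResidueFieldEquiv hm (1 ⊗ₜ 1))
    simpa [g, hf, Module.FaithfullyFlat.one_tmul_eq_zero_iff] using this
  have hgb : Function.Bijective (f.baseChange S) := by
    simpa [g] using LinearMap.bijective_of_ne_zero hg
  exact ⟨(LinearEquiv.ofBijective f
    ((Module.FaithfullyFlat.lTensor_bijective_iff_bijective R S f).mp hgb)).symm⟩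

lemma ringKrullDim_eq_of_map_maximalIdeal_eq [IsNoetherianRing R] [IsNoetherianRing S]
    [Module.Flat R S] (hm : (maximalIdeal R).map (algebraMap R S) = maximalIdeal S) :
    ringKrullDim R = ringKrullDim S := by
  have : (maximalIdeal S).LiesOver (maximalIdeal R) := by
    refine ⟨Ideal.IsMaximal.eq_of_le inferInstance Ideal.IsPrime.ne_top' ?_⟩
    exact Ideal.map_le_iff_le_comap.mp hm.le
  have : Nontrivial (S ⧸ (maximalIdeal R).map (algebraMap R S)) :=
    Ideal.Quotient.nontrivial_iff.mpr (hm ▸ Ideal.IsPrime.ne_top')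
  rw [← maximalIdeal_height_eq_ringKrullDim, ← maximalIdeal_height_eq_ringKrullDim,
    Ideal.height_eq_height_add_of_liesOver_of_hasGoingDown (maximalIdeal R) (maximalIdeal S),
    ← hm, Ideal.map_quotient_self, Ideal.height_bot, add_zero]

end IsLocalRing

/-- The Ext groups only depend on the modules up to isomorphism. -/
noncomputable def extGroupIso {R : Type u} [CommRing R] {M M' N N' : Type u}
    [AddCommGroup M] [Module R M] [AddCommGroup N] [Module R N]
    [AddCommGroup M'] [Module R M'] [AddCommGroup N'] [Module R N']
    (e : M ≃ₗ[R] M') (f : N ≃ₗ[R] N') (n : ℕ) :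
    ExtGroup R M N n ≅ ExtGroup R M' N' n :=
  ((Ext R (ModuleCat.{u} R) n).mapIso e.toModuleIso.symm.op).app _ ≪≫
    ((Ext R (ModuleCat.{u} R) n).obj _).mapIso f.toModuleIso

section

variable {R S : Type u} [CommRing R] [CommRing S] [Algebra R S] [IsLocalRing R] [IsLocalRing S]
  [IsNoetherianRing R]

lemma nonempty_tensor_extGroup_residueField_linearEquiv [Module.Flat R S]
    (hm : (maximalIdeal R).map (algebraMap R S) = maximalIdeal S) (n : ℕ) :
    Nonempty (S ⊗[R] ExtGroup R (ResidueField R) R n ≃ₗ[S] ExtGroup S (ResidueField S) S n) := by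
  obtain ⟨e⟩ := nonempty_iso_extGroup_baseChange (R := R) S (ResidueField R) R n
  exact ⟨(e ≪≫ extGroupIso (tensorResidueFieldEquiv hm)
    (TensorProduct.AlgebraTensorModule.rid R S S) n).toLinearEquiv⟩

/-- A flat local homomorphism of Noetherian local rings with `𝔪_R S = 𝔪_S` preserves and
reflects the Gorenstein property. -/
theorem isGorensteinLocalRing_iff_of_map_maximalIdeal_eq [IsNoetherianRing S] [Module.Flat R S]
    [IsLocalHom (algebraMap R S)]
    (hm : (maximalIdeal R).map (algebraMap R S) = maximalIdeal S) :
    IsGorensteinLocalRing R ↔ IsGorensteinLocalRing S := by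
  have : Module.FaithfullyFlat R S := .of_flat_of_isLocalHom
  have e (n : ℕ) := (nonempty_tensor_extGroup_residueField_linearEquiv hm n).some
  have iso_iff {T : Type u} [CommRing T] [IsLocalRing T] (X : ModuleCat.{u} T) :
      Nonempty (X ≅ ModuleCat.of T (ResidueField T)) ↔ Nonempty (X ≃ₗ[T] ResidueField T) :=
    ⟨fun ⟨i⟩ ↦ ⟨i.toLinearEquiv⟩, fun ⟨i⟩ ↦ ⟨i.toModuleIso⟩⟩
  refine exists_congr fun n ↦ and_congr (by rw [ringKrullDim_eq_of_map_maximalIdeal_eq hm])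
    (and_congr (forall₂_congr fun i _ ↦ ?_) ?_)
  · rw [← (e i).toEquiv.subsingleton_congr,
      Module.FaithfullyFlat.subsingleton_tensorProduct_iff_right]
  · rw [iso_iff, iso_iff, ← nonempty_tensor_linearEquiv_residueField_iff hm]
    exact ⟨fun ⟨i⟩ ↦ ⟨(e n).symm ≪≫ₗ i⟩, fun ⟨i⟩ ↦ ⟨e n ≪≫ₗ i⟩⟩

end

/-- For an étale algebra of Noetherian rings, the local rings at a prime and at the prime below it
have the same dimension, and one is Gorenstein if and only if the other is. -/
theorem Algebra.Etale.ringKrullDim_eq_and_isGorensteinLocalRing_iff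
    {B A : Type u} [CommRing B] [CommRing A] [IsNoetherianRing B] [IsNoetherianRing A]
    [Algebra B A] [Algebra.Etale B A] (q : Ideal B) (p : Ideal A) [q.IsPrime] [p.IsPrime]
    [p.LiesOver q] :
    ringKrullDim (Localization.AtPrime q) = ringKrullDim (Localization.AtPrime p) ∧
      (IsGorensteinLocalRing (Localization.AtPrime q) ↔
        IsGorensteinLocalRing (Localization.AtPrime p)) := by
  let := Localization.AtPrime.algebraOfLiesOver q p
  have : IsLocalHom (algebraMap (Localization.AtPrime q) (Localization.AtPrime p)) := by
    rw [RingHom.algebraMap_toAlgebra]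
    exact Localization.isLocalHom_localRingHom q p (algebraMap B A) Ideal.LiesOver.over
  have : Algebra.FormallyUnramified B (Localization.AtPrime p) :=
    have : Algebra.FormallyUnramified A (Localization.AtPrime p) :=
      .of_isLocalization p.primeCompl
    .comp B A _
  have : Algebra.FormallyUnramified (Localization.AtPrime q) (Localization.AtPrime p) :=
    .of_restrictScalars B _ _
  have : Algebra.EssFiniteType B (Localization.AtPrime p) :=
    have : Algebra.EssFiniteType A (Localization.AtPrime p) :=
      .of_isLocalization _ p.primeCompl
    .comp B A _
  have : Algebra.EssFiniteType (Localization.AtPrime q) (Localization.AtPrime p) :=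
    .of_comp B _ _
  have hm := Algebra.FormallyUnramified.map_maximalIdeal
    (R := Localization.AtPrime q) (S := Localization.AtPrime p)
  exact ⟨ringKrullDim_eq_of_map_maximalIdeal_eq hm,
    isGorensteinLocalRing_iff_of_map_maximalIdeal_eq hm⟩

/-- For an étale ring homomorphism of Noetherian rings that is surjective on prime
spectra, the source is Gorenstein in codimension `r` iff the target is. -/
theorem gorensteinInCodim_iff_of_etale
    (B A : Type u) [CommRing B] [CommRing A] [IsNoetherianRing B] [IsNoetherianRing A]
    [Algebra B A] [Algebra.Etale B A]
    (hsurj : Function.Surjective (PrimeSpectrum.comap (algebraMap B A)))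
    (r : ℕ) :
    GorensteinInCodim B r ↔ GorensteinInCodim A r := by
  have key (p : PrimeSpectrum A) :=
    haveI : p.asIdeal.LiesOver (PrimeSpectrum.comap (algebraMap B A) p).asIdeal := ⟨rfl⟩
    Algebra.Etale.ringKrullDim_eq_and_isGorensteinLocalRing_iff
      (PrimeSpectrum.comap (algebraMap B A) p).asIdeal p.asIdeal
  rw [GorensteinInCodim, GorensteinInCodim, hsurj.forall]
  exact forall_congr' fun p ↦ imp_congr (by rw [(key p).1]) (key p).2
end
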